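/- Let σ² > 0 and ε > 0 be real numbers, and let P_ε > 0 be the unique positive real with (1/2) * (P_ε/σ² + Real.log (σ²/(P_ε + σ²))) = 2 * ε². Then for every real P ≥ 0 one has klDiv (gaussianReal 0 (P + σ²)) (gaussianReal 0 σ²) ≤ ENNReal.ofReal (2 * ε²) if and only if P ≤ P_ε. -/

import Mathlib

open MeasureTheory ProbabilityTheory
open scoped ENNReal NNReal Classical

/-- Kullback–Leibler divergence of `μ` from `ν`: `∫ log (dμ/dν) dμ` when `μ ≪ ν` and the
log-likelihood ratio is `μ`-integrable, and `∞` otherwise. -/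
noncomputable def klDiv {α : Type*} [MeasurableSpace α] (μ ν : Measure α) : ℝ≥0∞ :=
  if μ ≪ ν ∧ Integrable (llr μ ν) μ then ENNReal.ofReal (∫ x, llr μ ν x ∂μ) else ⊤

lemma llr_gaussianReal_zero_mean {v w : ℝ≥0} (hv : v ≠ 0) (hw : w ≠ 0) :
    llr (gaussianReal 0 v) (gaussianReal 0 w) =ᵐ[gaussianReal 0 v]
      fun x ↦ 1 / 2 * Real.log (w / v) + (1 / w - 1 / v) / 2 * x ^ 2 := by
  have hac := gaussianReal_absolutelyContinuous 0 hv
  have hvw := hac.trans (gaussianReal_absolutelyContinuous' 0 hw)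
  have hv0 : (0 : ℝ) < v := by positivity
  have hw0 : (0 : ℝ) < w := by positivity
  filter_upwards [hvw (Measure.rnDeriv_eq_div hac (gaussianReal_absolutelyContinuous 0 hw)),
    hac (rnDeriv_gaussianReal 0 v), hac (rnDeriv_gaussianReal 0 w)] with x hx hxv hxw
  rw [llr, hx, hxv, hxw, ENNReal.toReal_div, toReal_gaussianPDF, toReal_gaussianPDF,
    Real.log_div (gaussianPDFReal_pos 0 v x hv).ne' (gaussianPDFReal_pos 0 w x hw).ne']
  simp only [gaussianPDFReal, sub_zero]
  rw [Real.log_mul (by positivity) (by positivity), Real.log_mul (by positivity) (by positivity),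
    Real.log_exp, Real.log_exp, Real.log_inv, Real.log_inv, Real.log_sqrt (by positivity),
    Real.log_sqrt (by positivity), Real.log_mul (by positivity) hv0.ne',
    Real.log_mul (by positivity) hw0.ne', Real.log_div hw0.ne' hv0.ne']
  field_simp
  ring

lemma integrable_sq_gaussianReal (v : ℝ≥0) :
    Integrable (fun x ↦ x ^ 2) (gaussianReal 0 v) :=
  (memLp_id_gaussianReal 2).integrable_sq

lemma integral_sq_gaussianReal (v : ℝ≥0) : ∫ x, x ^ 2 ∂gaussianReal 0 v = v := by
  rw [← variance_fun_id_gaussianReal (μ := 0) (v := v),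
    variance_of_integral_eq_zero (by fun_prop) integral_id_gaussianReal]

lemma klDiv_gaussianReal_zero_mean {v w : ℝ≥0} (hv : v ≠ 0) (hw : w ≠ 0) :
    klDiv (gaussianReal 0 v) (gaussianReal 0 w) =
      ENNReal.ofReal (1 / 2 * ((v : ℝ) / w - 1 + Real.log (w / v))) := by
  have hllr := llr_gaussianReal_zero_mean hv hw
  have hsq := (integrable_sq_gaussianReal v).const_mul ((1 / w - 1 / v : ℝ) / 2)
  rw [klDiv, if_pos ⟨(gaussianReal_absolutelyContinuous 0 hv).trans
    (gaussianReal_absolutelyContinuous' 0 hw),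
    ((integrable_const _).add hsq).congr hllr.symm⟩, integral_congr_ae hllr,
    integral_add (integrable_const _) hsq, integral_const, integral_const_mul,
    integral_sq_gaussianReal]
  have hv0 : (v : ℝ) ≠ 0 := by exact_mod_cast hv
  have hw0 : (w : ℝ) ≠ 0 := by exact_mod_cast hw
  congr 1
  simp only [probReal_univ, one_smul]
  field_simp
  ring

lemma strictMonoOn_div_add_log_div {s : ℝ} (hs : 0 < s) :
    StrictMonoOn (fun p ↦ p / s + Real.log (s / (p + s))) (Set.Ici 0) := by
  intro a (ha : 0 ≤ a) b (hb : 0 ≤ b) hab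
  have has : 0 < a + s := by positivity
  have hbs : 0 < b + s := by positivity
  have hlog := Real.log_lt_sub_one_of_pos (div_pos hbs has)
    (by rw [Ne, div_eq_one_iff_eq has.ne']; linarith)
  rw [Real.log_div hbs.ne' has.ne'] at hlog
  have hdiv : (b + s) / (a + s) - 1 = (b - a) / (a + s) := by field_simp; ring
  have hle : (b - a) / (a + s) ≤ (b - a) / s := by gcongr; linarith
  have hsub : (b - a) / s = b / s - a / s := sub_div ..
  simp only [Real.log_div hs.ne' has.ne', Real.log_div hs.ne' hbs.ne']
  linarith

theorem stmt_5 (σ2 : ℝ≥0) (hσ : 0 < σ2) (ε : ℝ) (hε : 0 < ε) (Pε : ℝ≥0) (hPε : 0 < Pε)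
    (heq : (1/2) * ((Pε : ℝ) / (σ2 : ℝ) + Real.log ((σ2 : ℝ) / ((Pε : ℝ) + (σ2 : ℝ)))) =
      2 * ε ^ 2) :
    ∀ P : ℝ≥0,
      klDiv (gaussianReal 0 (P + σ2)) (gaussianReal 0 σ2) ≤ ENNReal.ofReal (2 * ε ^ 2) ↔
        P ≤ Pε := by
  intro P
  have hs : (0 : ℝ) < σ2 := hσ
  have hP : ((P + σ2 : ℝ≥0) : ℝ) / σ2 - 1 = P / σ2 := by
    push_cast
    field_simp
    ring
  rw [klDiv_gaussianReal_zero_mean (by positivity) hσ.ne',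
    ENNReal.ofReal_le_ofReal_iff (by positivity), ← heq, hP, NNReal.coe_add,
    mul_le_mul_iff_right₀ (by norm_num)]
  exact (strictMonoOn_div_add_log_div hs).le_iff_le P.2 Pε.2
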